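/- arXiv:0808.1775 — 2 statements merged into one kernel-verified Lean document; each statement's English description precedes it below -/
import Mathlib

section
/- Let p be an odd prime and ε ∈ {1, −1}. Let R = ℤ[X]/(X² − 1) and let N be the quotient of the R-module R × R by the cyclic submodule generated by the element (p, −(X + ε)). Then the class ν of (X − ε, 0) in N is nonzero and satisfies p·ν = 0 and (X + ε)·ν = 0. -/
/-!
Since `X² = 1` and `ε² = 1`, the product `(X - ε)(X + ε)` vanishes in `R`. Hence `(X + ε)ν = 0`, and
`p (X - ε, 0) = (X - ε) (p, -(X + ε))` lies in the submodule, so `pν = 0`. If `ν` were zero, then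
`X - ε = a p` for some `a ∈ R`; the ring homomorphism `R → ℤ`, `X ↦ -ε`, would give `p ∣ 2`,
which is impossible for an odd prime.
-/

open Polynomial in
/-- The ring `R = ℤ[X]/(X² − 1)`, the integral group ring of the cyclic group of order 2. -/
abbrev RR : Type := ℤ[X] ⧸ Ideal.span ({X ^ 2 - 1} : Set ℤ[X])

open Polynomial in
/-- The image of the variable `X` in `ℤ[X]/(X² − 1)`. -/
noncomputable def Xbar : RR :=
  Ideal.Quotient.mk (Ideal.span ({X ^ 2 - 1} : Set ℤ[X])) X

/-- A square root `c` of `1` in `ℤ` gives a ring homomorphism `R → ℤ` with `X ↦ c`. -/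
theorem exists_eval_hom (c : ℤ) (hc : c ^ 2 = 1) : ∃ f : RR →+* ℤ, f Xbar = c := by
  refine ⟨Ideal.Quotient.lift _ (Polynomial.evalRingHom c) ?_, ?_⟩
  · intro a ha
    obtain ⟨b, rfl⟩ := Ideal.mem_span_singleton.mp ha
    simp [hc]
  · simp [Xbar]

theorem Xbar_sq : Xbar ^ 2 = 1 := by
  have h := Ideal.Quotient.eq_zero_iff_mem.mpr
    (Ideal.mem_span_singleton_self (Polynomial.X ^ 2 - 1 : Polynomial ℤ))
  rw [map_sub, map_pow, map_one] at h
  exact sub_eq_zero.mp h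

/-- Let `p` be an odd prime, `ε = ±1`, and let `N` be the quotient of `R × R`
(`R = ℤ[X]/(X² − 1)`) by the cyclic submodule generated by `(p, −(X + ε))`.  Then the class
`ν` of `(X − ε, 0)` in `N` is a nonzero element with `pν = 0` and `(X + ε)ν = 0`. -/
theorem stmt14 (p : ℕ) (hp : p.Prime) (hoddp : Odd p) (ε : ℤ) (hε : ε = 1 ∨ ε = -1) :
    let N := (RR × RR) ⧸
      Submodule.span RR ({((p : RR), -(Xbar + (ε : RR)))} : Set (RR × RR))
    let ν : N := Submodule.Quotient.mk ((Xbar - (ε : RR), 0))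
    ν ≠ 0 ∧ (p : RR) • ν = 0 ∧ (Xbar + (ε : RR)) • ν = 0 := by
  intro N ν
  have hε2 : ε ^ 2 = 1 := by rcases hε with rfl | rfl <;> norm_num
  have hεR : (ε : RR) ^ 2 = 1 := by exact_mod_cast congrArg (Int.cast : ℤ → RR) hε2
  have hmul : (Xbar + (ε : RR)) * (Xbar - (ε : RR)) = 0 := by
    linear_combination Xbar_sq - hεR
  refine ⟨?_, ?_, ?_⟩
  · intro h
    obtain ⟨a, ha⟩ := Submodule.mem_span_singleton.mp ((Submodule.Quotient.mk_eq_zero _).mp h)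
    have h1 : a * (p : RR) = Xbar - (ε : RR) := congrArg Prod.fst ha
    obtain ⟨f, hf⟩ := exists_eval_hom (-ε) (by rw [neg_sq, hε2])
    have h2 : f a * (p : ℤ) = -ε - ε := by
      have h3 := congrArg f h1
      rwa [map_mul, map_natCast, map_sub, map_intCast, hf] at h3
    have hdvd : (p : ℤ) ∣ 2 := by
      refine ⟨-ε * f a, ?_⟩
      linear_combination ε * h2 - 2 * hε2
    have hdvd' : p ∣ 2 := by exact_mod_cast hdvd
    have hp2 : p = 2 := (Nat.prime_dvd_prime_iff_eq hp Nat.prime_two).mp hdvd'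
    subst hp2
    exact absurd hoddp (by decide)
  · refine (Submodule.Quotient.mk_eq_zero _).mpr
      (Submodule.mem_span_singleton.mpr ⟨Xbar - (ε : RR), ?_⟩)
    refine Prod.ext ?_ ?_
    · change (Xbar - (ε : RR)) * (p : RR) = (p : RR) * (Xbar - (ε : RR))
      exact mul_comm _ _
    · change (Xbar - (ε : RR)) * -(Xbar + (ε : RR)) = (p : RR) * 0
      linear_combination -hmul
  · refine (Submodule.Quotient.mk_eq_zero _).mpr ?_
    have hz : (Xbar + (ε : RR)) • ((Xbar - (ε : RR), 0) : RR × RR) = 0 :=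
      Prod.ext hmul (mul_zero _)
    beta_reduce
    rw [hz]
    exact Submodule.zero_mem _
end

section
/- Let R = ℤ[X]/(X² − 1). Let ℤ denote the trivial R-module (ℤ with X acting as +1) and ℤ^w the sign R-module (ℤ with X acting as −1). Then for every finite R-module T and every k ≥ 0, the trivial module ℤ is not a direct summand of ℤ^w ⊕ T ⊕ R^k: there is no R-module C with ℤ ⊕ C ≅ ℤ^w ⊕ T ⊕ R^k as R-modules. -/
open Polynomial in
/-- Evaluation of `ℤ[X]/(X² − 1)` at an integer square root of unity `r`. -/
noncomputable def evalHom (r : ℤ) (hr : r ^ 2 = 1) : RR →+* ℤ :=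
  Ideal.Quotient.lift _ (Polynomial.eval₂RingHom (RingHom.id ℤ) r)
    (by
      intro a ha
      rw [Ideal.mem_span_singleton] at ha
      obtain ⟨c, rfl⟩ := ha
      rw [map_mul]
      have h : Polynomial.eval₂RingHom (RingHom.id ℤ) r (X ^ 2 - 1 : ℤ[X]) = 0 := by
        simp [hr]
      rw [h, zero_mul])

/-- The trivial `R`-module `ℤ` (with `X` acting as `+1`). -/
def Zt : Type := ℤ

/-- The sign `R`-module `ℤ^w` (with `X` acting as `−1`). -/
def Zw : Type := ℤ

instance : AddCommGroup Zt := inferInstanceAs (AddCommGroup ℤ)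
instance : AddCommGroup Zw := inferInstanceAs (AddCommGroup ℤ)

noncomputable instance : Module RR Zt := Module.compHom ℤ (evalHom 1 (by norm_num))
noncomputable instance : Module RR Zw := Module.compHom ℤ (evalHom (-1) (by norm_num))

theorem Xbar_smul_Zt (z : Zt) : Xbar • z = z := by
  have h : evalHom 1 (by norm_num) Xbar = 1 := by simp [evalHom, Xbar]
  change (evalHom 1 (by norm_num) Xbar * (show ℤ from z) : ℤ) = z
  rw [h, one_mul]

theorem Xbar_smul_Zw (z : Zw) : Xbar • z = -z := by
  have h : evalHom (-1) (by norm_num) Xbar = -1 := by simp [evalHom, Xbar]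
  change (evalHom (-1) (by norm_num) Xbar * (show ℤ from z) : ℤ) = -(show ℤ from z)
  rw [h, neg_one_mul]

open Polynomial in
/-- The `X`-invariants of the regular module `R` are the multiples of the norm element `1 + X`. -/
theorem exists_of_Xbar_mul_eq (r : RR) (h : Xbar * r = r) : ∃ c : RR, r = c + Xbar * c := by
  obtain ⟨f, rfl⟩ := Ideal.Quotient.mk_surjective r
  rw [Xbar, ← map_mul, Ideal.Quotient.eq, Ideal.mem_span_singleton] at h
  obtain ⟨g, hg⟩ := h
  have hf : f = g + X * g := by
    have hX : (X - 1 : ℤ[X]) ≠ 0 := by simpa using X_sub_C_ne_zero (1 : ℤ)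
    apply mul_left_cancel₀ hX
    linear_combination hg
  refine ⟨Ideal.Quotient.mk _ g, ?_⟩
  rw [Xbar, ← map_mul, ← map_add, ← hf]

/-- Over `R = ℤ[X]/(X² − 1)`, the trivial module `ℤ` is not a direct summand of
`ℤ^w ⊕ T ⊕ R^k` for any finite `R`-module `T` and any `k ≥ 0`. -/
theorem stmt16 (T : Type) [AddCommGroup T] [Module RR T] [Finite T] (k : ℕ) :
    (∀ z : Zt, Xbar • z = z) ∧ (∀ z : Zw, Xbar • z = -z) ∧
    ∀ (C : Type) [AddCommGroup C] [Module RR C],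
      ¬ Nonempty ((Zt × C) ≃ₗ[RR] (Zw × (T × (Fin k → RR)))) := by
  refine ⟨Xbar_smul_Zt, Xbar_smul_Zw, ?_⟩
  rintro C _ _ ⟨e⟩
  let one : Zt := (1 : ℤ)
  let p : (Zw × (T × (Fin k → RR))) →ₗ[RR] Zt := LinearMap.fst RR Zt C ∘ₗ e.symm.toLinearMap
  obtain ⟨a, t, r, hm⟩ : ∃ a t r, e (one, 0) = (a, t, r) := ⟨_, _, _, rfl⟩
  have hp : p (a, t, r) = one := by simp [p, ← hm]
  have hfix : Xbar • (a, t, r) = (a, t, r) := by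
    rw [← hm, ← map_smul, Prod.smul_mk, Xbar_smul_Zt, smul_zero]
  simp only [Prod.smul_mk, Prod.mk.injEq, Xbar_smul_Zw] at hfix
  obtain ⟨ha, -, hr⟩ := hfix
  have ha0 : a = 0 := by
    change -(show ℤ from a) = (show ℤ from a) at ha
    change (show ℤ from a) = (0 : ℤ)
    lia
  choose c hc using fun j => exists_of_Xbar_mul_eq (r j) (congrFun hr j)
  have hrc : r = c + Xbar • c := funext hc
  have ht : p (0, t, 0) = 0 := by
    have hn : Nat.card T • p (0, t, 0) = 0 := by
      rw [← map_nsmul]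
      simp only [Prod.smul_mk, smul_zero, card_nsmul_eq_zero']
      exact map_zero p
    have hn' : (Nat.card T : ℤ) * (show ℤ from p (0, t, 0)) = 0 := by
      rw [← nsmul_eq_mul]
      exact hn
    exact (mul_eq_zero.mp hn').resolve_left (by exact_mod_cast Nat.card_pos.ne')
  have hsplit : ((a, t, r) : Zw × (T × (Fin k → RR)))
      = (0, t, 0) + ((0, 0, c) + Xbar • (0, 0, c)) := by
    simp [ha0, hrc]
  rw [hsplit, map_add, map_add, map_smul, Xbar_smul_Zt, ht, zero_add] at hp
  change (show ℤ from p (0, 0, c)) + (show ℤ from p (0, 0, c)) = (1 : ℤ) at hp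
  lia
end
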